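/- The field of constants of F⟨Y_{ij}⟩ coincides with the field of constants of F: for every u ∈ L, D_L(u) = 0 if and only if there exists c ∈ F with d(c) = 0 and u = algebraMap F L c (composing F → A → L). -/

import Mathlib

open MvPolynomial

/-- The ring of differential polynomials `A = F{Y_ij}`: multivariate polynomials over `F`
in the variables `Y i j k` (with `Y i j := Y i j 0`). -/
abbrev Agen (F : Type*) [Field F] (n : ℕ) : Type _ :=
  MvPolynomial (Fin n × Fin n × ℕ) F

/-!
If `u = p / q` is a reduced fraction with `u' = 0`, then `p' q = p q'`, so that `p ∣ p'` and
`q ∣ q'`: it suffices to find the polynomials dividing their own derivative. For these, the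
commutation relation `[∂/∂Y⁽ᵏ⁺¹⁾, D] = ∂/∂Y⁽ᵏ⁾` shows that if `Y⁽ᵏ⁾` occurs in `p` then so does
`Y⁽ᵏ⁺¹⁾`: otherwise `p` would divide `∂p/∂Y⁽ᵏ⁾`, which is nonzero and of lower degree in `Y⁽ᵏ⁾`.
As only finitely many variables occur in `p`, none does.
-/

section PartialDerivatives

variable {σ R : Type*} [CommSemiring R] {i : σ} {p : MvPolynomial σ R}

theorem degreeOf_pderiv_lt (h : pderiv i p ≠ 0) :
    degreeOf i (pderiv i p) < degreeOf i p := by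
  have lt_degreeOf : ∀ m ∈ (pderiv i p).support, m i < degreeOf i p := by
    intro m hm
    rw [mem_support_iff, coeff_pderiv] at hm
    have hle := degreeOf_le_iff.mp (le_refl (degreeOf i p)) (m + Finsupp.single i 1)
      (mem_support_iff.mpr (left_ne_zero_of_mul hm))
    simpa using hle
  obtain ⟨m, hm⟩ := support_nonempty.mpr h
  exact (degreeOf_lt_iff (Nat.zero_lt_of_lt (lt_degreeOf m hm))).mpr lt_degreeOf

variable [NoZeroDivisors R]

theorem dvd_pderiv_iff : p ∣ pderiv i p ↔ pderiv i p = 0 := by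
  refine ⟨fun ⟨q, hq⟩ => ?_, fun h => h ▸ dvd_zero p⟩
  by_contra hne
  have hpq : p * q ≠ 0 := hq ▸ hne
  have hlt := degreeOf_pderiv_lt hne
  rw [hq, degreeOf_mul_eq (left_ne_zero_of_mul hpq) (right_ne_zero_of_mul hpq)] at hlt
  exact (Nat.le_add_right _ _).not_gt hlt

theorem pderiv_eq_zero_iff_notMem_vars [CharZero R] : pderiv i p = 0 ↔ i ∉ p.vars := by
  refine ⟨fun h hi => ?_, pderiv_eq_zero_of_notMem_vars⟩
  obtain ⟨m, hm, him⟩ := (mem_vars_iff_mem_support i).mp hi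
  have hle : Finsupp.single i 1 ≤ m :=
    Finsupp.single_le_iff.mpr (Nat.one_le_iff_ne_zero.mpr (Finsupp.mem_support_iff.mp him))
  have hcoeff := coeff_pderiv (i := i) p (m - Finsupp.single i 1)
  rw [h, coeff_zero, tsub_add_cancel_of_le hle] at hcoeff
  exact mul_ne_zero (mem_support_iff.mp hm) (Nat.cast_add_one_ne_zero _) hcoeff.symm

end PartialDerivatives

/-- The derivation `D` of a polynomial ring prolongs the derivation `d` of its coefficients by
shifting the variables along `s`. Differential polynomials in indeterminates indexed by `ι` are the
case of the variables `ι × ℕ` with `s (i, k) = (i, k + 1)`. -/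
structure IsProlongation {σ R : Type*} [CommRing R] (d : Derivation ℤ R R) (s : σ → σ)
    (D : Derivation ℤ (MvPolynomial σ R) (MvPolynomial σ R)) : Prop where
  map_C (a : R) : D (C a) = C (d a)
  map_X (v : σ) : D (X v) = X (s v)

namespace IsProlongation

variable {σ R : Type*} [CommRing R] {d : Derivation ℤ R R} {s : σ → σ}
  {D : Derivation ℤ (MvPolynomial σ R) (MvPolynomial σ R)}

theorem pderiv_shift_apply (hD : IsProlongation d s D) (hs : Function.Injective s) (v : σ)
    (p : MvPolynomial σ R) :
    pderiv (s v) (D p) = D (pderiv (s v) p) + pderiv v p := by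
  classical
  induction p using MvPolynomial.induction_on with
  | C a => simp [hD.map_C]
  | add p q hp hq =>
    simp only [map_add, hp, hq]
    ring
  | mul_X p w hp =>
    have hconst : D (pderiv (s v) (X w)) = 0 := by
      rw [pderiv_X, Pi.single_apply]
      split_ifs <;> simp
    have hshift : pderiv (s v) (D (X w)) = pderiv v (X w) := by
      simp [hD.map_X, pderiv_X, Pi.single_apply, hs.eq_iff]
    simp only [Derivation.leibniz, smul_eq_mul, map_add, hp, hconst, hshift]
    ring

variable [NoZeroDivisors R] [CharZero R] {p : MvPolynomial σ R}

theorem shift_mem_vars_of_dvd_apply (hD : IsProlongation d s D) (hs : Function.Injective s)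
    (h : p ∣ D p) {v : σ} (hv : v ∈ p.vars) : s v ∈ p.vars := by
  by_contra hsv
  obtain ⟨q, hq⟩ := h
  have hpderiv : pderiv (s v) p = 0 := pderiv_eq_zero_of_notMem_vars hsv
  have hdvd : p ∣ pderiv v p := by
    have hcomm := hD.pderiv_shift_apply hs v p
    rw [hq, pderiv_mul, hpderiv, map_zero, zero_mul, zero_add, zero_add] at hcomm
    exact ⟨_, hcomm.symm⟩
  exact pderiv_eq_zero_iff_notMem_vars.mp (dvd_pderiv_iff.mp hdvd) hv

theorem eq_C_of_dvd_apply (hD : IsProlongation d s D) (hs : Function.Injective s)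
    (hper : Function.periodicPts s = ∅) (h : p ∣ D p) : p = C (coeff 0 p) := by
  rw [← vars_eq_empty_iff_eq_C, Finset.eq_empty_iff_forall_notMem]
  intro v hv
  have hmaps : Set.MapsTo s p.vars p.vars := fun _ => hD.shift_mem_vars_of_dvd_apply hs h
  have hmem : (⟨v, hv⟩ : (p.vars : Set σ)) ∈ Function.periodicPts hmaps.restrict :=
    (hmaps.restrict_inj.mpr hs.injOn).mem_periodicPts _
  have hv_per : v ∈ Function.periodicPts s :=
    Function.Semiconj.mapsTo_periodicPts (g := Subtype.val) (fun _ => rfl) hmem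
  simp [hper] at hv_per

end IsProlongation

theorem exists_mk'_eq_and_dvd_derivation {A K : Type*} [CommRing A] [IsDomain A]
    [UniqueFactorizationMonoid A] [Field K] [Algebra A K] [IsFractionRing A K]
    {D : Derivation ℤ A A} {DK : Derivation ℤ K K}
    (hDK : ∀ a, DK (algebraMap A K a) = algebraMap A K (D a)) {u : K} (hu : DK u = 0) :
    ∃ (p : A) (q : nonZeroDivisors A),
      IsLocalization.mk' K p q = u ∧ p ∣ D p ∧ (q : A) ∣ D q := by
  obtain ⟨p, q, hpq, rfl⟩ := IsFractionRing.exists_reduced_fraction (A := A) u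
  have hcross : D p * q = p * D q := by
    apply IsFractionRing.injective A K
    have hspec := congrArg DK (IsLocalization.mk'_spec K p q)
    rw [Derivation.leibniz, hu, smul_zero, add_zero, smul_eq_mul, hDK, hDK] at hspec
    rw [map_mul, map_mul, ← hspec, mul_right_comm, IsLocalization.mk'_spec]
  exact ⟨p, q, rfl, hpq.dvd_of_dvd_mul_right ⟨D q, hcross⟩,
    hpq.symm.dvd_of_dvd_mul_left ⟨D p, by rw [← hcross, mul_comm]⟩⟩

/-- The derivation of a commutative ring given by an additive map satisfying the Leibniz rule,
linear over `ℤ` so that no constants are prescribed. -/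
def derivationOfLeibniz {A : Type*} [CommRing A] (f : A → A)
    (hadd : ∀ a b, f (a + b) = f a + f b) (hmul : ∀ a b, f (a * b) = f a * b + a * f b) :
    Derivation ℤ A A :=
  Derivation.mk' (AddMonoidHom.mk' f hadd).toIntLinearMap fun a b => by
    simp [hmul, mul_comm, add_comm]

theorem periodicPts_eq_empty_of_forall_lt {α β : Type*} [Preorder β] {s : α → α} {g : α → β}
    (h : ∀ v, g v < g (s v)) : Function.periodicPts s = ∅ := by
  refine Set.eq_empty_of_forall_notMem fun v hv => ?_
  obtain ⟨n, hn, hfix⟩ := Function.mem_periodicPts.mp hv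
  have hmono : StrictMono fun n => g (s^[n] v) := strictMono_nat_of_lt_succ fun n => by
    simpa only [Function.iterate_succ_apply'] using h _
  exact (hmono hn).ne' (congrArg g hfix)

theorem stmt_4_general {σ F K : Type*} [Field F] [CharZero F] {d : Derivation ℤ F F} {s : σ → σ}
    {D : Derivation ℤ (MvPolynomial σ F) (MvPolynomial σ F)} (hD : IsProlongation d s D)
    (hs : Function.Injective s) (hper : Function.periodicPts s = ∅)
    [Field K] [Algebra (MvPolynomial σ F) K] [IsFractionRing (MvPolynomial σ F) K]
    {DK : Derivation ℤ K K}
    (hDK : ∀ a, DK (algebraMap (MvPolynomial σ F) K a) = algebraMap (MvPolynomial σ F) K (D a))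
    (u : K) :
    DK u = 0 ↔ ∃ c : F, d c = 0 ∧ u = algebraMap (MvPolynomial σ F) K (C c) := by
  have hDK_C (c : F) : DK (algebraMap (MvPolynomial σ F) K (C c)) =
      algebraMap (MvPolynomial σ F) K (C (d c)) := by
    rw [hDK, hD.map_C]
  constructor
  · intro hu
    obtain ⟨p, q, hpq, hp, hq⟩ := exists_mk'_eq_and_dvd_derivation hDK hu
    have huC : u = algebraMap (MvPolynomial σ F) K
        (C (coeff 0 p / coeff 0 (q : MvPolynomial σ F))) := by
      rw [← hpq, IsFractionRing.mk'_eq_div, hD.eq_C_of_dvd_apply hs hper hp,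
        hD.eq_C_of_dvd_apply hs hper hq, coeff_zero_C, coeff_zero_C]
      exact (map_div₀ ((algebraMap (MvPolynomial σ F) K).comp C) _ _).symm
    refine ⟨_, ?_, huC⟩
    rw [huC, hDK_C] at hu
    exact C_eq_zero.mp ((map_eq_zero_iff _ (IsFractionRing.injective _ K)).mp hu)
  · rintro ⟨c, hc, rfl⟩
    rw [hDK_C, hc, C_0, map_zero]

/-- The field of constants of `F⟨Y_ij⟩` (the fraction field of `F{Y_ij}`)
coincides with the field of constants of `F`. -/
theorem stmt_4
    {F : Type*} [Field F] [CharZero F] (d : F → F)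
    (hd_add : ∀ a b : F, d (a + b) = d a + d b)
    (hd_mul : ∀ a b : F, d (a * b) = d a * b + a * d b)
    (n : ℕ) (hn : 1 ≤ n)
    (D : Agen F n → Agen F n)
    (hD_add : ∀ a b, D (a + b) = D a + D b)
    (hD_mul : ∀ a b, D (a * b) = D a * b + a * D b)
    (hD_C : ∀ f : F, D (C f) = C (d f))
    (hD_Y : ∀ (i j : Fin n) (k : ℕ),
      D (X (i, j, k)) = X (i, j, k + 1))
    (DL : FractionRing (Agen F n) → FractionRing (Agen F n))
    (hDL_add : ∀ a b, DL (a + b) = DL a + DL b)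
    (hDL_mul : ∀ a b, DL (a * b) = DL a * b + a * DL b)
    (hDL_comp : ∀ a : Agen F n,
      DL (algebraMap (Agen F n) (FractionRing (Agen F n)) a) =
        algebraMap (Agen F n) (FractionRing (Agen F n)) (D a)) :
    ∀ u : FractionRing (Agen F n), DL u = 0 ↔
      ∃ c : F, d c = 0 ∧
        u = algebraMap (Agen F n) (FractionRing (Agen F n)) (C c) := by
  let shift : Fin n × Fin n × ℕ → Fin n × Fin n × ℕ := Prod.map id (Prod.map id Nat.succ)
  have shift_injective : Function.Injective shift :=
    Function.injective_id.prodMap (Function.injective_id.prodMap Nat.succ_injective)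
  have shift_aperiodic : Function.periodicPts shift = ∅ :=
    periodicPts_eq_empty_of_forall_lt (g := fun v => v.2.2) fun v => Nat.lt_succ_self v.2.2
  have hprol : IsProlongation (derivationOfLeibniz d hd_add hd_mul) shift
      (derivationOfLeibniz D hD_add hD_mul) :=
    ⟨hD_C, fun (i, j, k) => hD_Y i j k⟩
  exact stmt_4_general (DK := derivationOfLeibniz DL hDL_add hDL_mul)
    hprol shift_injective shift_aperiodic hDL_comp
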